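/- (Strong Prefix Extensibility.) Let 𝒩 be one of the concrete network architectures p2p, senderbox (sb), or bag. For every synchronous word ρ and every 𝒩-channel-compliant finite word w such that, for every participant r, w↾r is a prefix of split(ρ)↾r, there exists a finite word u such that w·u is 𝒩-channel-compliant and w·u ≡_𝒫 split(ρ). -/

import Mathlib

/-!
The word `w` is completed along `ρ`, message by message. Suppose `ρ = α ++ m :: β` and every event of
`split α` has already been executed, in the sense that `proj r (split α)` is a prefix of `proj r w`
for all `r`. If the send of `m` is still missing it can be appended, since insertion is always
defined. If then the receive of `m` is missing, it can be appended as soon as the architecture allows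
it in such a situation; `exists_extension` is this induction, with compliance abstracted to a
predicate closed under the two kinds of steps.

What remains is that the receive of `m = (p, q, v)` is enabled. The receiver has executed exactly its
part of `split α`, so `m` has been received `count m α` times, while the sender has sent `m` at least
once more. In a bag this already says that `m` is in the buffer. In a FIFO architecture where the
channel determines the sender, the messages sent on the channel `c` of `m` start with
`α_c ++ [m]`, where `α_c` is the part of `α` travelling on `c`. The received messages form a prefix of
the sent ones. This prefix contains `α_c` with multiplicity, hence is at least as long as `α_c`; were it
longer, it would contain `α_c ++ [m]` and thus `m` once too often. So it equals `α_c`, and `m` is the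
head of the buffer.
-/

/-- Asynchronous events: send events `p▷q!v` and receive events `p▷q?v`. -/
inductive Event (P V : Type) where
  | send (p q : P) (v : V)
  | recv (p q : P) (v : V)
deriving DecidableEq

/-- The active participant of an event: the sender of a send, the receiver of a receive. -/
def Event.active {P V : Type} : Event P V → P
  | .send p _ _ => p
  | .recv _ q _ => q

/-- A network architecture: channels `C`, buffer contents `B`, a channel map,
partial insert/remove operations, and an empty buffer. -/
structure NetArch (P V C B : Type) where
  chan : P → P → C
  insert : P × P × V → B → Option B
  remove : P × P × V → B → Option B
  b0 : B

variable {P V C B : Type}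

/-- Executing a single event on a channel state. -/
def NetArch.step [DecidableEq C] (N : NetArch P V C B) :
    Event P V → (C → B) → Option (C → B)
  | .send p q v, ξ => (N.insert (p, q, v) (ξ (N.chan p q))).map (Function.update ξ (N.chan p q))
  | .recv p q v, ξ => (N.remove (p, q, v) (ξ (N.chan p q))).map (Function.update ξ (N.chan p q))

/-- Executing a finite word of events from a channel state. -/
def NetArch.runFrom [DecidableEq C] (N : NetArch P V C B) :
    List (Event P V) → (C → B) → Option (C → B)
  | [], ξ => some ξ
  | e :: w, ξ => (N.step e ξ).bind (N.runFrom w)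

/-- The initial channel state: every channel holds the empty buffer. -/
def NetArch.init (N : NetArch P V C B) : C → B := fun _ => N.b0

/-- A finite word is channel-compliant if executing it from the initial channel
state is defined at every step. -/
def NetArch.compliant [DecidableEq C] (N : NetArch P V C B) (w : List (Event P V)) : Prop :=
  (N.runFrom w N.init).isSome

/-- A finite word is channel-matched if it is channel-compliant and reaches the
initial (all-empty) channel state. -/
def NetArch.matched [DecidableEq C] (N : NetArch P V C B) (w : List (Event P V)) : Prop :=
  N.runFrom w N.init = some N.init

/-- Projection of a word onto the events in which participant `r` is active. -/
def proj [DecidableEq P] (r : P) (w : List (Event P V)) : List (Event P V) :=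
  w.filter (fun e => decide (e.active = r))

/-- Equality under local projection. -/
def equivP [DecidableEq P] (w₁ w₂ : List (Event P V)) : Prop :=
  ∀ r : P, proj r w₁ = proj r w₂

/-- `split` replaces every synchronous message exchange `(p,q,v)` by the two
consecutive asynchronous events `p▷q!v · p▷q?v`. -/
def split : List (P × P × V) → List (Event P V)
  | [] => []
  | m :: ρ => Event.send m.1 m.2.1 m.2.2 :: Event.recv m.1 m.2.1 m.2.2 :: split ρ

/-- FIFO insertion: append at the tail (always defined). -/
def fifoInsert {M : Type} (m : M) (b : List M) : Option (List M) := some (b ++ [m])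

/-- FIFO removal: defined iff the buffer has head `m`, removing the head. -/
def fifoRemove {M : Type} [DecidableEq M] (m : M) : List M → Option (List M)
  | [] => none
  | m' :: b => if m' = m then some b else none

/-- Multiset insertion: add one occurrence (always defined). -/
def bagInsert {M : Type} (m : M) (b : Multiset M) : Option (Multiset M) := some (m ::ₘ b)

/-- Multiset removal: defined iff `m ∈ b`, deleting one occurrence. -/
def bagRemove {M : Type} [DecidableEq M] (m : M) (b : Multiset M) : Option (Multiset M) :=
  if m ∈ b then some (b.erase m) else none

/-- Peer-to-peer FIFO architecture: one FIFO channel per sender-receiver pair. -/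
def p2p (P V : Type) [DecidableEq P] [DecidableEq V] :
    NetArch P V (P × P) (List (P × P × V)) :=
  ⟨fun p q => (p, q), fifoInsert, fifoRemove, []⟩

/-- Senderbox FIFO architecture: one FIFO channel per sender. -/
def sb (P V : Type) [DecidableEq P] [DecidableEq V] :
    NetArch P V P (List (P × P × V)) :=
  ⟨fun p _ => p, fifoInsert, fifoRemove, []⟩

/-- Mailbox FIFO architecture: one FIFO channel per receiver. -/
def mb (P V : Type) [DecidableEq P] [DecidableEq V] :
    NetArch P V P (List (P × P × V)) :=
  ⟨fun _ q => q, fifoInsert, fifoRemove, []⟩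

/-- Monobox FIFO architecture: a single FIFO channel shared by all pairs. -/
def monob (P V : Type) [DecidableEq P] [DecidableEq V] :
    NetArch P V Unit (List (P × P × V)) :=
  ⟨fun _ _ => (), fifoInsert, fifoRemove, []⟩

/-- Bag architecture: a single channel holding a multiset of messages. -/
def bag (P V : Type) [DecidableEq P] [DecidableEq V] :
    NetArch P V Unit (Multiset (P × P × V)) :=
  ⟨fun _ _ => (), bagInsert, bagRemove, 0⟩

/-! ### Sent and received messages, and local projections -/

/-- The messages sent in a word, in order. -/
def sent (w : List (Event P V)) : List (P × P × V) :=
  w.filterMap fun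
    | .send p q v => some (p, q, v)
    | .recv _ _ _ => none

/-- The messages received in a word, in order. -/
def recd (w : List (Event P V)) : List (P × P × V) :=
  w.filterMap fun
    | .send _ _ _ => none
    | .recv p q v => some (p, q, v)

@[simp] lemma sent_nil : sent ([] : List (Event P V)) = [] := rfl
@[simp] lemma recd_nil : recd ([] : List (Event P V)) = [] := rfl
@[simp] lemma sent_send (p q : P) (v : V) (w : List (Event P V)) :
    sent (.send p q v :: w) = (p, q, v) :: sent w := rfl
@[simp] lemma sent_recv (p q : P) (v : V) (w : List (Event P V)) :
    sent (.recv p q v :: w) = sent w := rfl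
@[simp] lemma recd_send (p q : P) (v : V) (w : List (Event P V)) :
    recd (.send p q v :: w) = recd w := rfl
@[simp] lemma recd_recv (p q : P) (v : V) (w : List (Event P V)) :
    recd (.recv p q v :: w) = (p, q, v) :: recd w := rfl

lemma sent_append (w u : List (Event P V)) : sent (w ++ u) = sent w ++ sent u :=
  List.filterMap_append

lemma sent_split (α : List (P × P × V)) : sent (split α) = α := by
  induction α with
  | nil => rfl
  | cons m α ih => simp [split, ih]

lemma recd_split (α : List (P × P × V)) : recd (split α) = α := by
  induction α with
  | nil => rfl
  | cons m α ih => simp [split, ih]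

lemma split_append (α β : List (P × P × V)) : split (α ++ β) = split α ++ split β := by
  induction α with
  | nil => rfl
  | cons m α ih => simp [split, ih]

lemma proj_append [DecidableEq P] (r : P) (w u : List (Event P V)) :
    proj r (w ++ u) = proj r w ++ proj r u :=
  List.filter_append ..

/-- A participant's own projection determines what it received, up to the multiplicity of each
message. -/
lemma count_recd_proj [DecidableEq P] [DecidableEq V] (m : P × P × V) (w : List (Event P V)) :
    (recd (proj m.2.1 w)).count m = (recd w).count m := by
  obtain ⟨p, q, v⟩ := m
  induction w with
  | nil => rfl
  | cons e w ih =>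
    cases e with
    | send a b x =>
      by_cases h : a = q <;> simpa [proj, Event.active, h] using ih
    | recv a b x =>
      by_cases h : b = q
      · simpa [proj, Event.active, h, List.count_cons] using ih
      · simpa [proj, Event.active, h, List.count_cons] using ih

/-- If a predicate on messages holds only for messages from `p`, then the messages sent that satisfy
it can be read off from the projection to `p`. -/
lemma filter_sent_proj [DecidableEq P] (p : P) (f : P × P × V → Bool)
    (hf : ∀ m, f m = true → m.1 = p) (w : List (Event P V)) :
    (sent (proj p w)).filter f = (sent w).filter f := by
  induction w with
  | nil => rfl
  | cons e w ih =>
    cases e with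
    | send a b x =>
      by_cases h : a = p
      · simp only [proj] at ih
        simp [proj, Event.active, h, List.filter_cons, ← ih]
      · have : f (a, b, x) ≠ true := fun h' => h (hf _ h')
        simpa [proj, Event.active, h, List.filter_cons, this] using ih
    | recv a b x =>
      by_cases h : b = p <;> simpa [proj, Event.active, h] using ih

/-- If the receiver of `m` has executed its part of `split α`, it has received `m` at least as often
as `m` occurs in `α`. -/
lemma count_le_count_recd [DecidableEq P] [DecidableEq V] {α : List (P × P × V)}
    {w : List (Event P V)} (h : ∀ r : P, proj r (split α) <+: proj r w) (m : P × P × V) :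
    α.count m ≤ (recd w).count m := by
  have h1 : (recd (proj m.2.1 (split α))).count m ≤ (recd (proj m.2.1 w)).count m :=
    ((h m.2.1).filterMap _).sublist.count_le m
  rwa [count_recd_proj, count_recd_proj, recd_split] at h1

lemma count_recd_eq [DecidableEq P] [DecidableEq V] {α : List (P × P × V)}
    {w : List (Event P V)} {m : P × P × V} (h : proj m.2.1 (split α) = proj m.2.1 w) :
    (recd w).count m = α.count m := by
  rw [← count_recd_proj, ← h, count_recd_proj, recd_split]

/-- If `p` has executed its part of `split α` followed by the send of `m`, and `f` selects only messages
from `p`, then the selected messages sent start with those of `α ++ [m]`. -/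
lemma filter_sent_prefix [DecidableEq P] {α : List (P × P × V)} {w : List (Event P V)}
    {m : P × P × V} (f : P × P × V → Bool) (hf : ∀ m', f m' = true → m'.1 = m.1)
    (h : proj m.1 (split α) ++ [Event.send m.1 m.2.1 m.2.2] <+: proj m.1 w) :
    (α ++ [m]).filter f <+: (sent w).filter f := by
  have h1 : (sent (proj m.1 (split α) ++ [Event.send m.1 m.2.1 m.2.2])).filter f <+:
      (sent (proj m.1 w)).filter f := (h.filterMap _).filter f
  rw [filter_sent_proj _ _ hf, sent_append, List.filter_append, filter_sent_proj _ _ hf,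
    sent_split] at h1
  simpa [List.filter_append] using h1

/-- If appending the event `e` keeps the projection to its active participant a prefix, it keeps all
projections prefixes. -/
lemma proj_prefix_snoc [DecidableEq P] {w s : List (Event P V)} {e : Event P V}
    (h : ∀ r : P, proj r w <+: proj r s) (he : proj e.active w ++ [e] <+: proj e.active s) (r : P) :
    proj r (w ++ [e]) <+: proj r s := by
  rw [proj_append]
  by_cases hr : e.active = r
  · subst hr
    simpa [proj] using he
  · simpa [proj, hr] using h r

/-- If `a` is a prefix of `w`, and both `a ++ [e]` and `w` are prefixes of `s`, then `w` is either `a`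
or already extends `a ++ [e]`. -/
lemma eq_or_snoc_prefix {T : Type} {a w s : List T} {e : T} (h1 : a <+: w) (h2 : w <+: s)
    (h3 : a ++ [e] <+: s) : a = w ∨ a ++ [e] <+: w := by
  obtain ⟨t, rfl⟩ := h1
  cases t with
  | nil => simp
  | cons x t =>
    right
    exact List.prefix_of_prefix_length_le h3 h2 (by simp)

/-! ### Completing a word along `ρ` -/

/-- The induction along `ρ = α ++ β`, for an arbitrary predicate `K` on words (channel compliance)
under which sends are always possible and the receive of a message is possible once everything
before it and its send are done, and the receiver is ready. -/
lemma exists_extension [DecidableEq P] (K : List (Event P V) → Prop)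
    (hsend : ∀ w p q v, K w → K (w ++ [.send p q v]))
    (hrecv : ∀ α w (m : P × P × V), K w → (∀ r, proj r (split α) <+: proj r w) →
      proj m.1 (split α) ++ [.send m.1 m.2.1 m.2.2] <+: proj m.1 w →
      proj m.2.1 (split α) = proj m.2.1 w → K (w ++ [.recv m.1 m.2.1 m.2.2]))
    (β α : List (P × P × V)) (hβ : ∀ m ∈ β, m.1 ≠ m.2.1) (w : List (Event P V)) (hK : K w)
    (hw : ∀ r, proj r w <+: proj r (split (α ++ β)))
    (hα : ∀ r, proj r (split α) <+: proj r w) :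
    ∃ u, K (w ++ u) ∧ equivP (w ++ u) (split (α ++ β)) := by
  induction β generalizing α w with
  | nil =>
    refine ⟨[], by simpa using hK, fun r => ?_⟩
    have h1 := hw r
    simp only [List.append_nil] at h1 ⊢
    exact h1.eq_of_length_le (hα r).length_le
  | cons m β ih =>
    obtain ⟨p, q, v⟩ := m
    have hpq : p ≠ q := hβ _ List.mem_cons_self
    have hp : proj p (split α) ++ [.send p q v] <+: proj p (split (α ++ (p, q, v) :: β)) := by
      simp [split_append, split, proj, Event.active, hpq.symm]
    have hq : proj q (split α) ++ [.recv p q v] <+: proj q (split (α ++ (p, q, v) :: β)) := by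
      simp [split_append, split, proj, Event.active, hpq]
    -- Execute the send of the message, unless that has been done.
    obtain ⟨u₁, hK₁, hw₁, hα₁, hs⟩ : ∃ u₁, K (w ++ u₁) ∧
        (∀ r, proj r (w ++ u₁) <+: proj r (split (α ++ (p, q, v) :: β))) ∧
        (∀ r, proj r (split α) <+: proj r (w ++ u₁)) ∧
        proj p (split α) ++ [.send p q v] <+: proj p (w ++ u₁) := by
      rcases eq_or_snoc_prefix (hα p) (hw p) hp with h | h
      · refine ⟨[.send p q v], hsend _ _ _ _ hK, proj_prefix_snoc hw ?_, fun r => ?_, ?_⟩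
        · change proj p w ++ _ <+: proj p _
          rwa [← h]
        · rw [proj_append]
          exact (hα r).trans (List.prefix_append _ _)
        · rw [proj_append, h]
          simp [proj, Event.active]
      · exact ⟨[], by simpa using hK, by simpa using hw, by simpa using hα, by simpa using h⟩
    -- Likewise for the receive.
    obtain ⟨u₂, hK₂, hw₂, hα₂, hs₂, hr₂⟩ : ∃ u₂, K (w ++ u₂) ∧
        (∀ r, proj r (w ++ u₂) <+: proj r (split (α ++ (p, q, v) :: β))) ∧
        (∀ r, proj r (split α) <+: proj r (w ++ u₂)) ∧
        proj p (split α) ++ [.send p q v] <+: proj p (w ++ u₂) ∧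
        proj q (split α) ++ [.recv p q v] <+: proj q (w ++ u₂) := by
      rcases eq_or_snoc_prefix (hα₁ q) (hw₁ q) hq with h | h
      · refine ⟨u₁ ++ [.recv p q v], ?_⟩
        rw [← List.append_assoc]
        refine ⟨hrecv α _ (p, q, v) hK₁ hα₁ hs h, proj_prefix_snoc hw₁ ?_, fun r => ?_, ?_, ?_⟩
        · change proj q (w ++ u₁) ++ _ <+: proj q _
          rwa [← h]
        · rw [proj_append]
          exact (hα₁ r).trans (List.prefix_append _ _)
        · rw [proj_append]
          exact hs.trans (List.prefix_append _ _)
        · rw [proj_append _ (w ++ u₁), ← h]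
          simp [proj, Event.active]
      · exact ⟨u₁, hK₁, hw₁, hα₁, hs, h⟩
    have hstep : ∀ r, proj r (split (α ++ [(p, q, v)])) <+: proj r (w ++ u₂) := by
      intro r
      by_cases hrp : p = r
      · subst hrp
        simpa [split_append, proj_append, split, proj, Event.active, hpq.symm] using hs₂
      · by_cases hrq : q = r
        · subst hrq
          simpa [split_append, proj_append, split, proj, Event.active, hpq] using hr₂
        · simpa [split_append, proj_append, split, proj, Event.active, hrp, hrq] using hα₂ r
    obtain ⟨u, hu, hequiv⟩ := ih (α ++ [(p, q, v)]) (fun m hm => hβ m (List.mem_cons_of_mem _ hm))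
      (w ++ u₂) hK₂ (by simpa using hw₂) hstep
    exact ⟨u₂ ++ u, by simpa using hu, by simpa using hequiv⟩

/-! ### FIFO architectures -/

lemma runFrom_snoc [DecidableEq C] (N : NetArch P V C B) (w : List (Event P V)) (e : Event P V)
    (ξ : C → B) : N.runFrom (w ++ [e]) ξ = (N.runFrom w ξ).bind (N.step e) := by
  induction w generalizing ξ with
  | nil => cases h : N.step e ξ <;> simp [NetArch.runFrom, h]
  | cons a w ih => cases h : N.step a ξ <;> simp [NetArch.runFrom, h, ih]

lemma fifoRemove_eq_some {M : Type} [DecidableEq M] {m : M} {b b' : List M}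
    (h : fifoRemove m b = some b') : b = m :: b' := by
  cases b with
  | nil => simp [fifoRemove] at h
  | cons a b =>
    simp only [fifoRemove] at h
    split_ifs at h with h1
    simp_all

/-- On each channel of a FIFO architecture, the messages sent are those received followed by the
buffer contents. -/
lemma fifo_run [DecidableEq P] [DecidableEq V] [DecidableEq C]
    (N : NetArch P V C (List (P × P × V))) (hi : N.insert = fifoInsert)
    (hr : N.remove = fifoRemove) (w : List (Event P V)) (ξ ξ' : C → List (P × P × V))
    (h : N.runFrom w ξ = some ξ') (c : C) :
    ξ c ++ (sent w).filter (fun m => decide (N.chan m.1 m.2.1 = c)) =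
      (recd w).filter (fun m => decide (N.chan m.1 m.2.1 = c)) ++ ξ' c := by
  induction w generalizing ξ with
  | nil => simp_all [NetArch.runFrom]
  | cons e w ih =>
    rw [NetArch.runFrom, Option.bind_eq_some_iff] at h
    obtain ⟨ξ₁, h1, h2⟩ := h
    have := ih ξ₁ h2
    cases e with
    | send p q v =>
      simp only [NetArch.step, hi, fifoInsert, Option.map_some, Option.some.injEq] at h1
      subst h1
      by_cases hc : N.chan p q = c
      · subst hc
        simpa using this
      · simpa [hc, Function.update_of_ne (Ne.symm hc)] using this
    | recv p q v =>
      simp only [NetArch.step, hr, Option.map_eq_some_iff] at h1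
      obtain ⟨b, hb, rfl⟩ := h1
      have hb := fifoRemove_eq_some hb
      by_cases hc : N.chan p q = c
      · subst hc
        rw [hb]
        simpa using this
      · simpa [hc, Function.update_of_ne (Ne.symm hc)] using this

/-- Strong prefix extensibility for every FIFO architecture in which the channel determines the
sender; this covers both peer-to-peer and senderbox. -/
lemma fifo_extension [DecidableEq P] [DecidableEq V] [DecidableEq C]
    (N : NetArch P V C (List (P × P × V))) (hi : N.insert = fifoInsert)
    (hr : N.remove = fifoRemove) (h0 : N.b0 = [])
    (hchan : ∀ p q p' q', N.chan p q = N.chan p' q' → p = p')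
    (ρ : List (P × P × V)) (hρ : ∀ m ∈ ρ, m.1 ≠ m.2.1) (w : List (Event P V))
    (hK : N.compliant w) (hw : ∀ r : P, proj r w <+: proj r (split ρ)) :
    ∃ u, N.compliant (w ++ u) ∧ equivP (w ++ u) (split ρ) := by
  refine exists_extension N.compliant ?_ ?_ ρ [] hρ w hK hw (fun r => by simp [split, proj])
  · intro w p q v h
    obtain ⟨ξ, hξ⟩ := Option.isSome_iff_exists.1 h
    simp [NetArch.compliant, runFrom_snoc, hξ, NetArch.step, hi, fifoInsert]
  · intro α w m h hα hs hq
    obtain ⟨ξ, hξ⟩ := Option.isSome_iff_exists.1 h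
    have hrun := fifo_run N hi hr w _ _ hξ (N.chan m.1 m.2.1)
    simp only [NetArch.init, h0, List.nil_append] at hrun
    set f : P × P × V → Bool := fun m' => decide (N.chan m'.1 m'.2.1 = N.chan m.1 m.2.1) with hf
    have hfm : f m = true := by simp [hf]
    have hpre := filter_sent_prefix f (fun m' h' => hchan _ _ _ _ (of_decide_eq_true h')) hs
    rw [List.filter_append, List.filter_singleton, hfm] at hpre
    simp only [cond_true] at hpre
    -- `α_c` is contained in the received messages with multiplicity, so it is not longer.
    have hlen : (α.filter f).length ≤ ((recd w).filter f).length := by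
      refine List.Subperm.length_le (List.subperm_ext_iff.2 fun x hx => ?_)
      have hfx := (List.mem_filter.1 hx).2
      rw [List.count_filter hfx, List.count_filter hfx]
      exact count_le_count_recd hα x
    have hpre' : (recd w).filter f <+: (sent w).filter f := hrun ▸ List.prefix_append _ _
    have h1 : α.filter f <+: (recd w).filter f :=
      List.prefix_of_prefix_length_le ((List.prefix_append _ _).trans hpre) hpre' hlen
    rcases eq_or_snoc_prefix h1 hpre' hpre with h2 | h2
    · rw [hrun, ← h2, List.prefix_append_right_inj] at hpre
      obtain ⟨b, hb⟩ := hpre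
      simp [NetArch.compliant, runFrom_snoc, hξ, NetArch.step, hr, ← hb, fifoRemove]
    · have h3 := h2.sublist.count_le m
      rw [List.count_append, List.count_filter hfm, List.count_filter hfm, count_recd_eq hq,
        List.count_singleton_self] at h3
      omega

/-! ### The bag architecture -/

/-- `Multiset.coe_count` with the `BEq` instance of the product type `P × P × V` on the right. -/
lemma coe_count_msg [DecidableEq P] [DecidableEq V] (m : P × P × V) (l : List (P × P × V)) :
    Multiset.count m (l : Multiset (P × P × V)) = l.count m := by
  induction l with
  | nil => rfl
  | cons a l ih =>
    rw [← Multiset.cons_coe, Multiset.count_cons, ih, List.count_cons]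
    by_cases h : m = a
    · simp [h]
    · simp [h, Ne.symm h]

/-- In the bag architecture, the messages sent are, as a multiset, those received together with the
buffer contents. -/
lemma bag_run [DecidableEq P] [DecidableEq V] (w : List (Event P V))
    (ξ ξ' : Unit → Multiset (P × P × V)) (h : (bag P V).runFrom w ξ = some ξ') :
    ξ () + (sent w : Multiset (P × P × V)) = (recd w : Multiset (P × P × V)) + ξ' () := by
  induction w generalizing ξ with
  | nil => simp_all [NetArch.runFrom]
  | cons e w ih =>
    rw [NetArch.runFrom, Option.bind_eq_some_iff] at h
    obtain ⟨ξ₁, h1, h2⟩ := h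
    have := ih ξ₁ h2
    cases e with
    | send p q v =>
      simp only [NetArch.step, bag, bagInsert, Option.map_some, Option.some.injEq] at h1
      subst h1
      simp only [Function.update_self, Multiset.cons_add] at this
      simpa [← Multiset.cons_coe] using this
    | recv p q v =>
      simp only [NetArch.step, bag, bagRemove, Option.map_eq_some_iff] at h1
      obtain ⟨b, hb, rfl⟩ := h1
      split_ifs at hb with hm
      simp only [Option.some.injEq] at hb
      subst hb
      simp only [Function.update_self] at this
      rw [← Multiset.cons_erase hm, recd_recv, sent_recv, ← Multiset.cons_coe, Multiset.cons_add,
        this, Multiset.cons_add]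

lemma bag_extension [DecidableEq P] [DecidableEq V]
    (ρ : List (P × P × V)) (hρ : ∀ m ∈ ρ, m.1 ≠ m.2.1) (w : List (Event P V))
    (hK : (bag P V).compliant w) (hw : ∀ r : P, proj r w <+: proj r (split ρ)) :
    ∃ u, (bag P V).compliant (w ++ u) ∧ equivP (w ++ u) (split ρ) := by
  refine exists_extension (bag P V).compliant ?_ ?_ ρ [] hρ w hK hw
    (fun r => by simp [split, proj])
  · intro w p q v h
    obtain ⟨ξ, hξ⟩ := Option.isSome_iff_exists.1 h
    rw [NetArch.compliant, runFrom_snoc, hξ]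
    simp [NetArch.step, bag, bagInsert]
  · intro α w m h hα hs hq
    obtain ⟨ξ, hξ⟩ := Option.isSome_iff_exists.1 h
    have hrun := congrArg (Multiset.count m) (bag_run w _ _ hξ)
    simp only [NetArch.init, bag, zero_add, Multiset.count_add, coe_count_msg] at hrun
    have hpre := (filter_sent_prefix (fun m' => decide (m'.1 = m.1))
      (fun m' h' => of_decide_eq_true h') hs).sublist.count_le m
    rw [List.count_filter (by simp), List.count_filter (by simp), List.count_append,
      List.count_singleton_self] at hpre
    have hrec := count_recd_eq hq
    have hmem : m ∈ ξ () := Multiset.count_pos.1 (by omega)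
    rw [NetArch.compliant, runFrom_snoc, hξ]
    simp [NetArch.step, bag, bagRemove, hmem]

/-- Strong Prefix Extensibility for the p2p, senderbox and bag architectures:
every channel-compliant word whose per-participant projections are prefixes of
those of `split ρ` extends to a channel-compliant word that is equal to
`split ρ` under local projection. -/
theorem strong_prefix_extensibility {P V : Type} [DecidableEq P] [DecidableEq V]
    (ρ : List (P × P × V)) (hρ : ∀ m ∈ ρ, m.1 ≠ m.2.1) (w : List (Event P V)) :
    ((p2p P V).compliant w → (∀ r : P, proj r w <+: proj r (split ρ)) →
      ∃ u, (p2p P V).compliant (w ++ u) ∧ equivP (w ++ u) (split ρ)) ∧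
    ((sb P V).compliant w → (∀ r : P, proj r w <+: proj r (split ρ)) →
      ∃ u, (sb P V).compliant (w ++ u) ∧ equivP (w ++ u) (split ρ)) ∧
    ((bag P V).compliant w → (∀ r : P, proj r w <+: proj r (split ρ)) →
      ∃ u, (bag P V).compliant (w ++ u) ∧ equivP (w ++ u) (split ρ)) := by
  exact ⟨fifo_extension _ rfl rfl rfl (fun _ _ _ _ h => congrArg Prod.fst h) ρ hρ w,
    fifo_extension _ rfl rfl rfl (fun _ _ _ _ h => h) ρ hρ w, bag_extension ρ hρ w⟩
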